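/- The Robin-boundary solution p = p₁ + p₂ + p₃ satisfies the Dirac delta initial condition at x₀: for every bounded continuous function f : ℝ → ℝ, the integral ∫_{−∞}^{L} f(x) · p(x, t) dx converges to f(x₀) as t → 0⁺. -/

import Mathlib

/-!
The kernel `U(·, t, a)` is the density of the Gaussian law of mean `a + νt` and variance `2Dt`,
which concentrates at `a` as `t → 0⁺`. Tested against `f` on `(-∞, L]`, the source at `x₀ < L`
therefore yields `f x₀` and its mirror image at `2L - x₀ > L` yields `0`.

The integral in `p₃` is controlled by a Chernoff bound. Put `c = 2L - x₀` and `κ = α/β`. For `η ≥ c`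
the weight `e^{κ(η - c)}` is at most `e^{r(η - c)}` for every `r ≥ κ`, and integrating the latter
against `U` over the whole line gives `e^{r(x - νt - c) + r²Dt}`, by the Gaussian moment generating
function. For `r > 0`, integrating over `x ≤ L ≤ c` leaves at most `r⁻¹ e^{-rνt + r²Dt}`, and the
choice `r = 1/√t` turns this into `√t e^{D - ν√t} → 0`.
-/

open Real MeasureTheory

/-- The free advection–diffusion kernel `U(x, t, η)`. -/
noncomputable def U (D ν : ℝ) (x t η : ℝ) : ℝ :=
  (1 / Real.sqrt (4 * Real.pi * D * t)) * Real.exp (-(x - η - ν * t) ^ 2 / (4 * D * t))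

/-- First term of the Robin-boundary solution: `p₁(x, t) = U(x, t, x₀)`. -/
noncomputable def p1 (D ν x₀ : ℝ) (x t : ℝ) : ℝ := U D ν x t x₀

/-- Second term: `p₂(x, t) = e^{(ν/D)(L − x₀)} U(x, t, 2L − x₀)`. -/
noncomputable def p2 (D ν L x₀ : ℝ) (x t : ℝ) : ℝ :=
  Real.exp ((ν / D) * (L - x₀)) * U D ν x t (2 * L - x₀)

/-- Third term:
`p₃(x, t) = 2(α/β + ν/(2D)) e^{(ν/D)(L − x₀)} ∫_{2L − x₀}^{∞} e^{(α/β)(η − (2L − x₀))} U(x, t, η) dη`. -/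
noncomputable def p3 (D ν L x₀ α β : ℝ) (x t : ℝ) : ℝ :=
  2 * (α / β + ν / (2 * D)) * Real.exp ((ν / D) * (L - x₀)) *
    ∫ η in Set.Ici (2 * L - x₀), Real.exp ((α / β) * (η - (2 * L - x₀))) * U D ν x t η

/-- The Robin-boundary solution `p = p₁ + p₂ + p₃`. -/
noncomputable def pRobin (D ν L x₀ α β : ℝ) (x t : ℝ) : ℝ :=
  p1 D ν x₀ x t + p2 D ν L x₀ x t + p3 D ν L x₀ α β x t

open Filter Topology

open ProbabilityTheory
open scoped NNReal

lemma gaussianReal_map_sqrt_mul_add (m : ℝ) (v : ℝ≥0) :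
    (gaussianReal 0 1).map (fun z => √v * z + m) = gaussianReal m v := by
  change (gaussianReal 0 1).map ((· + m) ∘ (√v * ·)) = gaussianReal m v
  rw [← Measure.map_map (by fun_prop) (by fun_prop), gaussianReal_map_const_mul,
    gaussianReal_map_add_const]
  congr 1
  · ring
  · ext
    simp

lemma tendsto_integral_gaussianReal {ι F : Type*} [NormedAddCommGroup F] [NormedSpace ℝ F]
    [CompleteSpace F] {l : Filter ι} [l.IsCountablyGenerated]
    {m : ι → ℝ} {v : ι → ℝ≥0} {a C : ℝ} {g : ℝ → F}
    (hm : Tendsto m l (𝓝 a)) (hv : Tendsto v l (𝓝 0))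
    (hg : StronglyMeasurable g) (hgC : ∀ x, ‖g x‖ ≤ C) (hga : ContinuousAt g a) :
    Tendsto (fun i => ∫ x, g x ∂gaussianReal (m i) (v i)) l (𝓝 (g a)) := by
  have standardize (i : ι) :
      ∫ x, g x ∂gaussianReal (m i) (v i) = ∫ z, g (√(v i) * z + m i) ∂gaussianReal 0 1 := by
    rw [← gaussianReal_map_sqrt_mul_add,
      integral_map (by fun_prop) hg.aestronglyMeasurable]
  have pointwise (z : ℝ) : Tendsto (fun i => √(v i) * z + m i) l (𝓝 a) := by
    simpa using ((NNReal.tendsto_coe.2 hv).sqrt.mul_const z).add hm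
  have key : Tendsto (fun i => ∫ z, g (√(v i) * z + m i) ∂gaussianReal 0 1) l
      (𝓝 (∫ _, g a ∂gaussianReal 0 1)) :=
    tendsto_integral_filter_of_dominated_convergence (fun _ => C)
      (.of_forall fun i => (hg.comp_measurable (by fun_prop)).aestronglyMeasurable)
      (.of_forall fun i => .of_forall fun z => hgC _) (integrable_const C)
      (.of_forall fun z => hga.tendsto.comp (pointwise z))
  simpa [standardize] using key

section Kernel

variable {D ν t : ℝ}

lemma U_nonneg (D ν x t η : ℝ) : 0 ≤ U D ν x t η := by
  unfold U
  positivity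

lemma U_eq_gaussianPDFReal (hDt : 0 < D * t) (x η : ℝ) :
    U D ν x t η = gaussianPDFReal (η + ν * t) (2 * (D * t)).toNNReal x := by
  rw [U, gaussianPDFReal, Real.coe_toNNReal _ (by positivity)]
  ring_nf

lemma U_eq_gaussianPDFReal_source (hDt : 0 < D * t) (x η : ℝ) :
    U D ν x t η = gaussianPDFReal (x - ν * t) (2 * (D * t)).toNNReal η := by
  rw [U, gaussianPDFReal, Real.coe_toNNReal _ (by positivity)]
  ring_nf

lemma measurable_uncurry_U (D ν t : ℝ) : Measurable fun p : ℝ × ℝ => U D ν p.1 t p.2 := by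
  unfold U
  fun_prop

lemma integrable_U (hDt : 0 < D * t) (a : ℝ) : Integrable fun x => U D ν x t a := by
  simpa only [U_eq_gaussianPDFReal hDt] using integrable_gaussianPDFReal _ _

lemma integral_mul_U (hDt : 0 < D * t) (g : ℝ → ℝ) (a : ℝ) :
    ∫ x, g x * U D ν x t a = ∫ x, g x ∂gaussianReal (a + ν * t) (2 * (D * t)).toNNReal := by
  have hv : (2 * (D * t)).toNNReal ≠ 0 := (Real.toNNReal_pos.2 (by positivity)).ne'
  rw [integral_gaussianReal_eq_integral_smul hv]
  simp only [U_eq_gaussianPDFReal hDt, smul_eq_mul, mul_comm (g _)]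

lemma integral_exp_mul_U (hDt : 0 < D * t) (r c x : ℝ) :
    ∫ η, rexp (r * (η - c)) * U D ν x t η = rexp (r * (x - ν * t - c) + r ^ 2 * (D * t)) := by
  have hv : (2 * (D * t)).toNNReal ≠ 0 := (Real.toNNReal_pos.2 (by positivity)).ne'
  calc ∫ η, rexp (r * (η - c)) * U D ν x t η
      = rexp (-(r * c)) * mgf id (gaussianReal (x - ν * t) (2 * (D * t)).toNNReal) r := by
        rw [mgf, integral_gaussianReal_eq_integral_smul hv, ← integral_const_mul]
        refine integral_congr_ae (.of_forall fun η => ?_)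
        have hexp : rexp (r * (η - c)) = rexp (-(r * c)) * rexp (r * η) := by
          rw [← Real.exp_add]
          ring_nf
        simp only [U_eq_gaussianPDFReal_source hDt, hexp, id_eq, smul_eq_mul]
        ring
    _ = rexp (r * (x - ν * t - c) + r ^ 2 * (D * t)) := by
        rw [mgf_id_gaussianReal, ← Real.exp_add, Real.coe_toNNReal _ (by positivity)]
        ring_nf

lemma integrable_exp_mul_U (hDt : 0 < D * t) (r c x : ℝ) :
    Integrable fun η => rexp (r * (η - c)) * U D ν x t η :=
  .of_integral_ne_zero <| by simpa only [integral_exp_mul_U hDt] using (Real.exp_pos _).ne'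

lemma integrableOn_mul_U {s : Set ℝ} {f : ℝ → ℝ} {M : ℝ} (hDt : 0 < D * t) (hs : MeasurableSet s)
    (hf : AEStronglyMeasurable f (volume.restrict s)) (hM : ∀ x ∈ s, ‖f x‖ ≤ M) (a : ℝ) :
    IntegrableOn (fun x => f x * U D ν x t a) s :=
  (integrable_U hDt a).integrableOn.bdd_mul hf (ae_restrict_of_forall_mem hs hM)

lemma tendsto_integral_mul_U {g : ℝ → ℝ} {a C : ℝ} (hD : 0 < D) (ν : ℝ) (hg : Measurable g)
    (hgC : ∀ x, ‖g x‖ ≤ C) (hga : ContinuousAt g a) :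
    Tendsto (fun t => ∫ x, g x * U D ν x t a) (𝓝[>] 0) (𝓝 (g a)) := by
  have mean : Tendsto (fun t : ℝ => a + ν * t) (𝓝[>] 0) (𝓝 a) :=
    tendsto_nhdsWithin_of_tendsto_nhds <| (by fun_prop : Continuous _).tendsto' _ _ (by simp)
  have variance : Tendsto (fun t : ℝ => (2 * (D * t)).toNNReal) (𝓝[>] 0) (𝓝 0) :=
    tendsto_nhdsWithin_of_tendsto_nhds <| (by fun_prop : Continuous _).tendsto' _ _ (by simp)
  refine (tendsto_integral_gaussianReal mean variance hg.stronglyMeasurable hgC hga).congr' ?_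
  filter_upwards [self_mem_nhdsWithin] with t ht
  exact (integral_mul_U (mul_pos hD ht) g a).symm

variable {s : Set ℝ} {f : ℝ → ℝ} {a M : ℝ}

lemma tendsto_setIntegral_mul_U (hD : 0 < D) (ν : ℝ) (hs : MeasurableSet s) (hf : Measurable f)
    (hM : ∀ x ∈ s, ‖f x‖ ≤ M) (hsa : ContinuousAt (s.indicator f) a) :
    Tendsto (fun t => ∫ x in s, f x * U D ν x t a) (𝓝[>] 0) (𝓝 (s.indicator f a)) := by
  have hbound (x : ℝ) : ‖s.indicator f x‖ ≤ max M 0 := by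
    by_cases hx : x ∈ s
    · simpa [hx] using .inl (hM x hx)
    · simp [hx]
  have hind (t : ℝ) : ∫ x, s.indicator f x * U D ν x t a = ∫ x in s, f x * U D ν x t a := by
    rw [← integral_indicator hs]
    simp only [Set.indicator_mul_left]
  simpa only [hind] using tendsto_integral_mul_U hD ν (hf.indicator hs) hbound hsa

lemma tendsto_setIntegral_mul_U_of_mem_nhds (hD : 0 < D) (ν : ℝ) (hs : MeasurableSet s)
    (hf : Measurable f) (hM : ∀ x ∈ s, ‖f x‖ ≤ M) (hfa : ContinuousAt f a) (ha : s ∈ 𝓝 a) :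
    Tendsto (fun t => ∫ x in s, f x * U D ν x t a) (𝓝[>] 0) (𝓝 (f a)) := by
  have hind : s.indicator f =ᶠ[𝓝 a] f := by
    filter_upwards [ha] with x hx using Set.indicator_of_mem hx f
  simpa only [hind.eq_of_nhds] using
    tendsto_setIntegral_mul_U hD ν hs hf hM (hfa.congr hind.symm)

lemma tendsto_setIntegral_mul_U_of_compl_mem_nhds (hD : 0 < D) (ν : ℝ) (hs : MeasurableSet s)
    (hf : Measurable f) (hM : ∀ x ∈ s, ‖f x‖ ≤ M) (ha : sᶜ ∈ 𝓝 a) :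
    Tendsto (fun t => ∫ x in s, f x * U D ν x t a) (𝓝[>] 0) (𝓝 0) := by
  have hind : s.indicator f =ᶠ[𝓝 a] fun _ => 0 := by
    filter_upwards [ha] with x hx using Set.indicator_of_notMem hx f
  simpa only [hind.eq_of_nhds] using
    tendsto_setIntegral_mul_U hD ν hs hf hM (continuousAt_const.congr hind.symm)

end Kernel

/-- The density at `(x, t)` emitted by sources on the half-line `[c, ∞)` of strength `e^{κ(η - c)}`:
the integral in `p₃`, where `c = 2L - x₀` and `κ = α/β`. -/
noncomputable def expSourceTail (D ν κ c x t : ℝ) : ℝ :=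
  ∫ η in Set.Ici c, rexp (κ * (η - c)) * U D ν x t η

section ExpSourceTail

variable {D ν κ c t : ℝ}

lemma p3_eq_const_mul_expSourceTail (D ν L x₀ α β x t : ℝ) :
    p3 D ν L x₀ α β x t = 2 * (α / β + ν / (2 * D)) * rexp (ν / D * (L - x₀)) *
      expSourceTail D ν (α / β) (2 * L - x₀) x t :=
  rfl

lemma expSourceTail_nonneg (D ν κ c x t : ℝ) : 0 ≤ expSourceTail D ν κ c x t :=
  integral_nonneg fun η => mul_nonneg (Real.exp_pos _).le (U_nonneg D ν x t η)

lemma measurable_expSourceTail (D ν κ c t : ℝ) :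
    Measurable fun x => expSourceTail D ν κ c x t := by
  have hU := measurable_uncurry_U D ν t
  exact (StronglyMeasurable.integral_prod_right' (ν := volume.restrict (Set.Ici c))
    (f := fun p : ℝ × ℝ => rexp (κ * (p.2 - c)) * U D ν p.1 t p.2)
    (by fun_prop : Measurable _).stronglyMeasurable).measurable

lemma expSourceTail_le {r : ℝ} (hDt : 0 < D * t) (hr : κ ≤ r) (x : ℝ) :
    expSourceTail D ν κ c x t ≤ rexp (r * (x - ν * t - c) + r ^ 2 * (D * t)) :=
  have hU := U_nonneg D ν x t
  calc expSourceTail D ν κ c x t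
      ≤ ∫ η in Set.Ici c, rexp (r * (η - c)) * U D ν x t η := by
        refine setIntegral_mono_on (integrable_exp_mul_U hDt κ c x).integrableOn
          (integrable_exp_mul_U hDt r c x).integrableOn measurableSet_Ici fun η hη => ?_
        have : 0 ≤ η - c := sub_nonneg.2 hη
        gcongr
        exact hU η
    _ ≤ ∫ η, rexp (r * (η - c)) * U D ν x t η :=
        setIntegral_le_integral (integrable_exp_mul_U hDt r c x)
          (.of_forall fun η => mul_nonneg (Real.exp_pos _).le (hU η))
    _ = rexp (r * (x - ν * t - c) + r ^ 2 * (D * t)) := integral_exp_mul_U hDt r c x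

lemma integrableOn_expSourceTail (hDt : 0 < D * t) (L : ℝ) :
    IntegrableOn (fun x => expSourceTail D ν κ c x t) (Set.Iic L) := by
  obtain ⟨r, hκr, hr⟩ : ∃ r, κ ≤ r ∧ 0 < r :=
    ⟨max κ 1, le_max_left κ 1, one_pos.trans_le (le_max_right κ 1)⟩
  refine ((integrableOn_exp_mul_Iic hr L).const_mul
    (rexp (-r * (ν * t + c) + r ^ 2 * (D * t)))).mono'
    (measurable_expSourceTail D ν κ c t).aestronglyMeasurable (.of_forall fun x => ?_)
  rw [Real.norm_of_nonneg (expSourceTail_nonneg ..), ← Real.exp_add]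
  exact (expSourceTail_le hDt hκr x).trans_eq (by ring_nf)

lemma setIntegral_expSourceTail_le {L r : ℝ} (hDt : 0 < D * t) (hr : 0 < r) (hκr : κ ≤ r) :
    ∫ x in Set.Iic L, expSourceTail D ν κ c x t ≤
      r⁻¹ * rexp (r * (L - ν * t - c) + r ^ 2 * (D * t)) := by
  let A := rexp (-r * (ν * t + c) + r ^ 2 * (D * t))
  calc ∫ x in Set.Iic L, expSourceTail D ν κ c x t
      ≤ ∫ x in Set.Iic L, A * rexp (r * x) :=
        integral_mono (integrableOn_expSourceTail hDt L)
          ((integrableOn_exp_mul_Iic hr L).const_mul A) fun x =>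
          (expSourceTail_le hDt hκr x).trans_eq (by rw [← Real.exp_add]; ring_nf)
    _ = r⁻¹ * (A * rexp (r * L)) := by
        rw [integral_const_mul, integral_exp_mul_Iic hr]
        ring
    _ = r⁻¹ * rexp (r * (L - ν * t - c) + r ^ 2 * (D * t)) := by
        rw [← Real.exp_add]
        ring_nf

lemma setIntegral_expSourceTail_le_sqrt {L : ℝ} (hD : 0 < D) (hLc : L ≤ c) (ht : 0 < t)
    (hκt : κ ≤ (√t)⁻¹) :
    ∫ x in Set.Iic L, expSourceTail D ν κ c x t ≤ √t * rexp (D - ν * √t) := by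
  have hsqrt : 0 < √t := Real.sqrt_pos.2 ht
  have drift : (√t)⁻¹ * (ν * t) = ν * √t := by
    nth_rw 2 [← Real.sq_sqrt ht.le]
    field_simp
  have diffusion : (√t)⁻¹ ^ 2 * (D * t) = D := by
    rw [inv_pow, Real.sq_sqrt ht.le]
    field_simp
  have offset : (√t)⁻¹ * (L - c) ≤ 0 :=
    mul_nonpos_of_nonneg_of_nonpos (inv_pos.2 hsqrt).le (sub_nonpos.2 hLc)
  refine (setIntegral_expSourceTail_le (mul_pos hD ht) (inv_pos.2 hsqrt) hκt).trans ?_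
  rw [inv_inv, diffusion]
  gcongr
  linarith

lemma tendsto_setIntegral_expSourceTail {L : ℝ} (hD : 0 < D) (ν κ : ℝ) (hLc : L ≤ c) :
    Tendsto (fun t => ∫ x in Set.Iic L, expSourceTail D ν κ c x t) (𝓝[>] 0) (𝓝 0) := by
  have hsqrt : Tendsto (fun t : ℝ => √t) (𝓝[>] 0) (𝓝[>] 0) :=
    tendsto_nhdsWithin_iff.2 ⟨tendsto_nhdsWithin_of_tendsto_nhds <|
      Real.continuous_sqrt.tendsto' _ _ Real.sqrt_zero,
      eventually_mem_nhdsWithin.mono fun t ht => Real.sqrt_pos.2 ht⟩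
  have hbound : Tendsto (fun t : ℝ => √t * rexp (D - ν * √t)) (𝓝[>] 0) (𝓝 0) :=
    tendsto_nhdsWithin_of_tendsto_nhds <| (by fun_prop : Continuous _).tendsto' _ _ (by simp)
  refine squeeze_zero' (.of_forall fun t => integral_nonneg fun x => expSourceTail_nonneg ..) ?_
    hbound
  filter_upwards [self_mem_nhdsWithin,
    (tendsto_inv_nhdsGT_zero.comp hsqrt).eventually_ge_atTop κ] with t ht hκt
  exact setIntegral_expSourceTail_le_sqrt hD hLc ht hκt

variable {f : ℝ → ℝ} {L M : ℝ}

lemma integrableOn_mul_expSourceTail (hDt : 0 < D * t)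
    (hf : AEStronglyMeasurable f (volume.restrict (Set.Iic L))) (hM : ∀ x ∈ Set.Iic L, ‖f x‖ ≤ M) :
    IntegrableOn (fun x => f x * expSourceTail D ν κ c x t) (Set.Iic L) :=
  (integrableOn_expSourceTail hDt L).bdd_mul hf (ae_restrict_of_forall_mem measurableSet_Iic hM)

lemma tendsto_setIntegral_mul_expSourceTail (hD : 0 < D) (ν κ : ℝ) (hLc : L ≤ c)
    (hM : ∀ x ∈ Set.Iic L, ‖f x‖ ≤ M) :
    Tendsto (fun t => ∫ x in Set.Iic L, f x * expSourceTail D ν κ c x t) (𝓝[>] 0) (𝓝 0) := by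
  refine squeeze_zero_norm' ?_
    (by simpa using (tendsto_setIntegral_expSourceTail hD ν κ hLc).const_mul M)
  filter_upwards [self_mem_nhdsWithin] with t ht
  rw [← integral_const_mul]
  refine norm_integral_le_of_norm_le
    ((integrableOn_expSourceTail (mul_pos hD ht) L).const_mul M)
    (ae_restrict_of_forall_mem measurableSet_Iic fun x hx => ?_)
  rw [norm_mul, Real.norm_of_nonneg (expSourceTail_nonneg ..)]
  exact mul_le_mul_of_nonneg_right (hM x hx) (expSourceTail_nonneg ..)

end ExpSourceTail

lemma setIntegral_mul_pRobin {D t L M : ℝ} {f : ℝ → ℝ} (ν x₀ α β : ℝ) (hDt : 0 < D * t)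
    (hf : AEStronglyMeasurable f (volume.restrict (Set.Iic L))) (hM : ∀ x ∈ Set.Iic L, ‖f x‖ ≤ M) :
    ∫ x in Set.Iic L, f x * pRobin D ν L x₀ α β x t =
      (∫ x in Set.Iic L, f x * U D ν x t x₀) +
      rexp (ν / D * (L - x₀)) * (∫ x in Set.Iic L, f x * U D ν x t (2 * L - x₀)) +
      2 * (α / β + ν / (2 * D)) * rexp (ν / D * (L - x₀)) *
        ∫ x in Set.Iic L, f x * expSourceTail D ν (α / β) (2 * L - x₀) x t := by
  have hU (a : ℝ) : IntegrableOn (fun x => f x * U D ν x t a) (Set.Iic L) :=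
    integrableOn_mul_U hDt measurableSet_Iic hf hM a
  have htail : IntegrableOn
      (fun x => f x * expSourceTail D ν (α / β) (2 * L - x₀) x t) (Set.Iic L) :=
    integrableOn_mul_expSourceTail hDt hf hM
  have hUU : IntegrableOn (fun x => f x * U D ν x t x₀ +
      rexp (ν / D * (L - x₀)) * (f x * U D ν x t (2 * L - x₀))) (Set.Iic L) :=
    (hU _).add ((hU _).const_mul _)
  rw [← integral_const_mul, ← integral_const_mul, ← integral_add (hU _) ((hU _).const_mul _),
    ← integral_add hUU (htail.const_mul _)]
  refine integral_congr_ae (.of_forall fun x => ?_)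
  simp only [pRobin, p1, p2, p3_eq_const_mul_expSourceTail]
  ring

theorem pRobin_delta_initial_condition_general (D ν L x₀ α β : ℝ) (hD : 0 < D) (hx₀ : x₀ < L)
    (_hβ : β ≠ 0) (f : ℝ → ℝ) (hf : Measurable f) (hfx₀ : ContinuousAt f x₀)
    (hbdd : ∃ M : ℝ, ∀ x ≤ L, |f x| ≤ M) :
    Tendsto (fun t : ℝ => ∫ x in Set.Iic L, f x * pRobin D ν L x₀ α β x t)
      (𝓝[>] 0) (𝓝 (f x₀)) := by
  obtain ⟨M, hM⟩ := hbdd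
  have hL : L < 2 * L - x₀ := by linarith
  have source : Tendsto (fun t => ∫ x in Set.Iic L, f x * U D ν x t x₀) (𝓝[>] 0) (𝓝 (f x₀)) :=
    tendsto_setIntegral_mul_U_of_mem_nhds hD ν measurableSet_Iic hf hM hfx₀ (Iic_mem_nhds hx₀)
  have image : Tendsto (fun t => ∫ x in Set.Iic L, f x * U D ν x t (2 * L - x₀))
      (𝓝[>] 0) (𝓝 0) :=
    tendsto_setIntegral_mul_U_of_compl_mem_nhds hD ν measurableSet_Iic hf hM
      (by simpa only [Set.compl_Iic] using Ioi_mem_nhds hL)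
  have tail : Tendsto
      (fun t => ∫ x in Set.Iic L, f x * expSourceTail D ν (α / β) (2 * L - x₀) x t)
      (𝓝[>] 0) (𝓝 0) :=
    tendsto_setIntegral_mul_expSourceTail hD ν (α / β) hL.le hM
  have sum := (source.add (image.const_mul (rexp (ν / D * (L - x₀))))).add
    (tail.const_mul (2 * (α / β + ν / (2 * D)) * rexp (ν / D * (L - x₀))))
  simp only [mul_zero, add_zero] at sum
  refine sum.congr' ?_
  filter_upwards [self_mem_nhdsWithin] with t ht
  exact (setIntegral_mul_pRobin ν x₀ α β (mul_pos hD ht) hf.aestronglyMeasurable hM).symm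

/-- The Robin-boundary solution satisfies the Dirac delta initial condition at `x₀`:
for every bounded continuous `f : ℝ → ℝ`, `∫_{−∞}^{L} f(x) p(x, t) dx → f(x₀)` as `t → 0⁺`. -/
theorem pRobin_delta_initial_condition (D ν L x₀ α β : ℝ) (hD : 0 < D) (hx₀ : x₀ < L)
    (hβ : β ≠ 0) (f : ℝ → ℝ) (hf : Continuous f) (hbdd : ∃ M : ℝ, ∀ x : ℝ, |f x| ≤ M) :
    Tendsto (fun t : ℝ => ∫ x in Set.Iic L, f x * pRobin D ν L x₀ α β x t)
      (𝓝[>] 0) (𝓝 (f x₀)) := by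
  obtain ⟨M, hM⟩ := hbdd
  exact pRobin_delta_initial_condition_general D ν L x₀ α β hD hx₀ hβ f hf.measurable
    hf.continuousAt ⟨M, fun x _ => hM x⟩
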